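/- Let M be a symmetric (n−1)×(n−1) matrix with ±1 entries, and let A,B ⊆ {1,…,n−1} with |A| = |B| be such that M[A,B] is λ-heavy for some λ > 0. Form a random symmetric n×n matrix M_n by appending to M a new row and column whose entries are independent Rademacher random variables. Then for any a ∈ B \ A and any distinct b_1, b_2 ∈ A \ B, one can choose distinct i, j ∈ {a, b_1, b_2} such that with probability at least 1/4 the submatrix M_n[A ∪ {a, n}, (B \ {a}) ∪ {i, j, n}] is (λ/2)-heavy. -/

import Mathlib

/-!
Put `S = A ∪ {a}`, `C = B \ {a}` and `w k = per M[S \ {k}, C ∪ {k}]`, so that `w a = per M[A, B]`.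
Expanding along the last row and the last column, the permanent of `Mₙ[S ∪ {n}, C ∪ {i, j, n}]` is
a constant plus a quadratic form in the new off-diagonal entries `x`. Its alternating sum over the
four sign patterns of `(xᵢ, xⱼ)` isolates the cross term `xᵢ xⱼ` and equals `± 4 (w i + w j)`, so
for every choice of the other entries at least one of the four patterns makes the permanent at
least `|w i + w j|` in absolute value. Finally
`2 (w a) = (w a + w b₁) + (w a + w b₂) - (w b₁ + w b₂)`, so one of these three sums is at least
`2/3 |w a|` in absolute value.
-/

open Finset

/-- The real number (`1` or `-1`) associated to a Boolean: a Rademacher value. -/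
noncomputable def rad (b : Bool) : ℝ := if b then 1 else -1

/-- The permanent of the submatrix of `M` with row set `A` and column set `B`,
defined as a sum over all bijections between `A` and `B` (it equals `0` if
`A.card ≠ B.card`). Since the permanent is invariant under row and column
permutations, this faithfully represents `per M[A,B]`. -/
noncomputable def permOn {m n : ℕ} (M : Matrix (Fin m) (Fin n) ℝ)
    (A : Finset (Fin m)) (B : Finset (Fin n)) : ℝ :=
  ∑ σ : {x // x ∈ A} ≃ {y // y ∈ B}, ∏ i : {x // x ∈ A}, M i.1 (σ i).1

/-- The random symmetric extension of a fixed `n' × n'` matrix `M` to an `n × n` matrix: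
the top-left `n' × n'` block is `M`, and the remaining entries are Rademacher values
determined symmetrically by the Boolean data `ω`. As `ω` ranges uniformly over all Boolean
data, the new entries (on and above the diagonal) are i.i.d. Rademacher random variables. -/
noncomputable def extSym {n' : ℕ} (n : ℕ) (M : Matrix (Fin n') (Fin n') ℝ)
    (ω : Fin n → Fin n → Bool) : Matrix (Fin n) (Fin n) ℝ :=
  fun i j =>
    if h : (i : ℕ) < n' ∧ (j : ℕ) < n' then M ⟨i, h.1⟩ ⟨j, h.2⟩
    else if i ≤ j then rad (ω i j) else rad (ω j i)

open Classical in
/-- The probability of the event `P` for the random symmetric extension of `M` to size `n`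
(i.e. conditionally on the outcome `M` for the top-left block). -/
noncomputable def probExt {n' : ℕ} (n : ℕ) (M : Matrix (Fin n') (Fin n') ℝ)
    (P : Matrix (Fin n) (Fin n) ℝ → Prop) : ℝ :=
  ((univ.filter fun ω : Fin n → Fin n → Bool => P (extSym n M ω)).card : ℝ) / 2 ^ (n * n)

open scoped Matrix

/-! ### Laplace expansion of permanents -/

section Permanent

section Bijections

variable {m n m' n' R : Type*} [Fintype m] [DecidableEq m] [Fintype n] [DecidableEq n]
  [Fintype m'] [DecidableEq m'] [Fintype n'] [DecidableEq n'] [CommSemiring R]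

/-- The permanent of a matrix whose rows and columns may be indexed by different types, as a sum
over all bijections from rows to columns (hence `0` if there are none). In contrast to
`Matrix.permanent`, it applies to submatrices without enumerating their rows and columns. -/
def bijPermanent (M : Matrix m n R) : R :=
  ∑ σ : m ≃ n, ∏ i, M i (σ i)

theorem bijPermanent_submatrix_equiv (M : Matrix m n R) (e : m' ≃ m) (f : n' ≃ n) :
    bijPermanent (M.submatrix e f) = bijPermanent M :=
  Fintype.sum_equiv (e.equivCongr f) _ _ fun σ => Fintype.prod_equiv e _ _ fun i => by simp

theorem bijPermanent_transpose (M : Matrix m n R) : bijPermanent Mᵀ = bijPermanent M :=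
  Fintype.sum_bijective Equiv.symm Equiv.symm_bijective _ _ fun σ =>
    Fintype.prod_equiv σ _ _ fun j => by simp

theorem bijPermanent_option (M : Matrix (Option m) n R) :
    bijPermanent M =
      ∑ j, M none j * bijPermanent (M.submatrix some (Subtype.val : {j' // j' ≠ j} → n)) := by
  have sum_over_fiber (j : n) :
      ∑ σ : Option m ≃ n with σ none = j, ∏ i, M i (σ i) =
        M none j * bijPermanent (M.submatrix some (Subtype.val : {j' // j' ≠ j} → n)) := by
    rw [bijPermanent, mul_sum, sum_subtype (p := fun σ : Option m ≃ n => σ none = j) _ (by simp)]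
    refine Fintype.sum_equiv (Equiv.optionSubtype j) _ _ fun σ => ?_
    rw [Fintype.prod_option, σ.2]
    rfl
  simp only [← sum_over_fiber]
  exact (sum_fiberwise _ _ _).symm

end Bijections

variable {m n : ℕ}

theorem permOn_eq_bijPermanent (M : Matrix (Fin m) (Fin n) ℝ) (A : Finset (Fin m))
    (B : Finset (Fin n)) :
    permOn M A B = bijPermanent (M.submatrix (Subtype.val : A → Fin m) (Subtype.val : B → Fin n)) :=
  rfl

theorem permOn_map {m' n' : ℕ} (M : Matrix (Fin m) (Fin n) ℝ) (f : Fin m' ↪ Fin m)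
    (g : Fin n' ↪ Fin n) (A : Finset (Fin m')) (B : Finset (Fin n')) :
    permOn M (A.map f) (B.map g) = permOn (M.submatrix f g) A B :=
  (bijPermanent_submatrix_equiv (M.submatrix Subtype.val Subtype.val)
    (A.equivMap f) (B.equivMap g)).symm

theorem permOn_transpose (M : Matrix (Fin m) (Fin n) ℝ) (A : Finset (Fin m))
    (B : Finset (Fin n)) : permOn Mᵀ B A = permOn M A B :=
  bijPermanent_transpose (M.submatrix Subtype.val Subtype.val)

/-- Identifies the columns remaining in `bijPermanent_option` with those of an erased column set. -/
def subtypeNeEquivErase {α : Type*} [DecidableEq α] (s : Finset α) (a : s) :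
    {b : s // b ≠ a} ≃ s.erase a where
  toFun b := ⟨b, mem_erase.2 ⟨fun h => b.2 (Subtype.ext h), b.1.2⟩⟩
  invFun b := ⟨⟨b, mem_of_mem_erase b.2⟩, fun h => ne_of_mem_erase b.2 (congrArg Subtype.val h)⟩

theorem permOn_insert_row (M : Matrix (Fin m) (Fin n) ℝ) {A : Finset (Fin m)}
    (B : Finset (Fin n)) {r : Fin m} (hr : r ∉ A) :
    permOn M (insert r A) B = ∑ c ∈ B, M r c * permOn M A (B.erase c) := by
  rw [permOn_eq_bijPermanent,
    ← bijPermanent_submatrix_equiv _ (subtypeInsertEquivOption hr).symm (Equiv.refl B),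
    bijPermanent_option, ← sum_coe_sort B]
  refine sum_congr rfl fun c _ => congrArg (M r c * ·) ?_
  exact bijPermanent_submatrix_equiv (M.submatrix Subtype.val Subtype.val)
    (Equiv.refl A) (subtypeNeEquivErase B c)

theorem permOn_insert_col (M : Matrix (Fin m) (Fin n) ℝ) (A : Finset (Fin m))
    {B : Finset (Fin n)} {c : Fin n} (hc : c ∉ B) :
    permOn M A (insert c B) = ∑ r ∈ A, M r c * permOn M (A.erase r) B := by
  rw [← permOn_transpose, permOn_insert_row _ _ hc]
  simp only [permOn_transpose, Matrix.transpose_apply]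

/-- The matrix of permanental cofactors of `M[S, T]`: its `(r, c)` entry is
`per M[S \ {r}, T \ {c}]`, extended by `0` to all rows and columns of `M`. -/
noncomputable def permCofactor (M : Matrix (Fin m) (Fin n) ℝ) (S : Finset (Fin m))
    (T : Finset (Fin n)) : Matrix (Fin m) (Fin n) ℝ :=
  .of fun r c => if r ∈ S ∧ c ∈ T then permOn M (S.erase r) (T.erase c) else 0

theorem permCofactor_apply (M : Matrix (Fin m) (Fin n) ℝ) {S : Finset (Fin m)}
    {T : Finset (Fin n)} {r : Fin m} {c : Fin n} (hr : r ∈ S) (hc : c ∈ T) :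
    permCofactor M S T r c = permOn M (S.erase r) (T.erase c) :=
  if_pos ⟨hr, hc⟩

theorem dotProduct_permCofactor_mulVec (M : Matrix (Fin m) (Fin n) ℝ) (S : Finset (Fin m))
    (T : Finset (Fin n)) (x : Fin m → ℝ) (y : Fin n → ℝ) :
    x ⬝ᵥ permCofactor M S T *ᵥ y =
      ∑ c ∈ T, y c * ∑ r ∈ S, x r * permOn M (S.erase r) (T.erase c) := by
  have column_sum (c : Fin n) : (x ᵥ* permCofactor M S T) c =
      if c ∈ T then ∑ r ∈ S, x r * permOn M (S.erase r) (T.erase c) else 0 := by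
    by_cases hc : c ∈ T <;> simp [Matrix.vecMul, dotProduct, permCofactor, hc]
  rw [Matrix.dotProduct_mulVec, dotProduct_comm, dotProduct]
  simp only [column_sum, mul_ite, mul_zero, sum_ite_mem, univ_inter]

theorem last_notMem_map_castSucc (S : Finset (Fin n)) :
    Fin.last n ∉ S.map Fin.castSuccEmb := by
  simp [Fin.castSucc_ne_last]

theorem permOn_insert_last (N : Matrix (Fin (m + 1)) (Fin (n + 1)) ℝ) (S : Finset (Fin m))
    (T : Finset (Fin n)) :
    permOn N (insert (Fin.last m) (S.map Fin.castSuccEmb))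
        (insert (Fin.last n) (T.map Fin.castSuccEmb)) =
      N (Fin.last m) (Fin.last n) * permOn (N.submatrix Fin.castSucc Fin.castSucc) S T +
        (fun r => N r.castSucc (Fin.last n)) ⬝ᵥ
          permCofactor (N.submatrix Fin.castSucc Fin.castSucc) S T *ᵥ
            fun c => N (Fin.last m) c.castSucc := by
  have erase_castSucc (c : Fin n) :
      (insert (Fin.last n) (T.map Fin.castSuccEmb)).erase c.castSucc =
        insert (Fin.last n) ((T.erase c).map Fin.castSuccEmb) := by
    rw [erase_insert_of_ne (Fin.castSucc_ne_last c).symm, map_erase, Fin.coe_castSuccEmb]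
  have expand_last_col (c : Fin n) :
      permOn N (S.map Fin.castSuccEmb) (insert (Fin.last n) ((T.erase c).map Fin.castSuccEmb)) =
        ∑ r ∈ S, N r.castSucc (Fin.last n) *
          permOn (N.submatrix Fin.castSucc Fin.castSucc) (S.erase r) (T.erase c) := by
    rw [permOn_insert_col _ _ (last_notMem_map_castSucc _), sum_map]
    refine sum_congr rfl fun r _ => ?_
    rw [← map_erase, permOn_map]
    rfl
  rw [permOn_insert_row _ _ (last_notMem_map_castSucc S), sum_insert (last_notMem_map_castSucc T),
    erase_insert (last_notMem_map_castSucc T), permOn_map, sum_map,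
    dotProduct_permCofactor_mulVec]
  simp only [Fin.coe_castSuccEmb, erase_castSucc, expand_last_col]

end Permanent

/-! ### Sign flips in a quadratic form -/

section SignFlips

variable {ι R : Type*} [DecidableEq ι] [CommRing R]

theorem piecewise_neg_self (s : Finset ι) (x : ι → R) :
    s.piecewise (-x) x = x + ∑ k ∈ s, (-2 * x k) • Pi.single k 1 := by
  ext k
  by_cases hk : k ∈ s <;> simp [Finset.sum_apply, Pi.single_apply, hk]
  ring

theorem quadraticMap_alternating_sum_add {V W : Type*} [AddCommGroup V] [Module R V]
    [AddCommGroup W] [Module R W] (Q : QuadraticMap R V W) (x u v : V) :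
    Q x - Q (x + u) - Q (x + v) + Q (x + u + v) = QuadraticMap.polar Q u v := by
  rw [QuadraticMap.polar, eq_sub_of_add_eq (Q.map_add_add_add_map x u v), add_comm v x]
  abel

theorem quadraticForm_alternating_sum_flip (Q : QuadraticForm R (ι → R)) (x : ι → R) {i j : ι}
    (hij : i ≠ j) :
    Q x - Q (piecewise {i} (-x) x) - Q (piecewise {j} (-x) x) + Q (piecewise {i, j} (-x) x) =
      4 * (x i * x j) * QuadraticMap.polar Q (Pi.single i 1) (Pi.single j 1) := by
  simp only [piecewise_neg_self, sum_singleton, sum_pair hij, ← add_assoc]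
  rw [quadraticMap_alternating_sum_add, QuadraticMap.polar_smul_left,
    QuadraticMap.polar_smul_right, smul_eq_mul, smul_eq_mul]
  ring

theorem exists_flip_abs_polar_le (Q : QuadraticForm ℝ (ι → ℝ)) {x : ι → ℝ} {i j : ι}
    (hij : i ≠ j) (hi : |x i| = 1) (hj : |x j| = 1) (z : ℝ) :
    ∃ s ∈ powerset {i, j},
      |QuadraticMap.polar Q (Pi.single i 1) (Pi.single j 1)| ≤
        |z + Q (s.piecewise (-x) x)| := by
  let p : ℝ := QuadraticMap.polar Q (Pi.single i 1) (Pi.single j 1)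
  let f (s : Finset ι) : ℝ := z + Q (s.piecewise (-x) x)
  have alternating_sum : f ∅ - f {i} - f {j} + f {i, j} = 4 * (x i * x j) * p := by
    rw [← quadraticForm_alternating_sum_flip Q x hij]
    simp only [f, piecewise_empty]
    ring
  have abs_alternating_sum : |f ∅ - f {i} - f {j} + f {i, j}| = 4 * |p| := by
    simp [alternating_sum, abs_mul, hi, hj]
  by_contra! all_small
  have small (s : Finset ι) (hs : s ⊆ {i, j}) : |f s| < |p| := all_small s (mem_powerset.2 hs)
  have small_empty := small ∅ (by simp)
  have small_i := small {i} (by simp)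
  have small_j := small {j} (by simp)
  have small_ij := small {i, j} subset_rfl
  linarith [abs_add_le (f ∅ - f {i} - f {j}) (f {i, j}), abs_sub (f ∅ - f {i}) (f {j}),
    abs_sub (f ∅) (f {i})]

theorem polar_toQuadraticForm'_single [Fintype ι] (P : Matrix ι ι R) (i j : ι) :
    QuadraticMap.polar P.toQuadraticForm' (Pi.single i 1) (Pi.single j 1) = P i j + P j i := by
  rw [Matrix.toQuadraticForm', LinearMap.BilinMap.polar_toQuadraticMap]
  simp [Matrix.toLinearMap₂'_apply']

end SignFlips

/-! ### The random symmetric extension -/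

section RandomExtension

theorem card_le_card_mul_card_filter {ι Ω : Type*} [Fintype Ω] (F : Finset ι) (f : ι → Ω → Ω)
    (hf : ∀ k ∈ F, Function.Injective (f k)) (P : Ω → Prop) [DecidablePred P]
    (h : ∀ ω, ∃ k ∈ F, P (f k ω)) :
    Fintype.card Ω ≤ #F * #{ω | P ω} := by
  classical
  have cover : univ ⊆ F.biUnion fun k => {ω | P (f k ω)} := fun ω _ => by simpa using h ω
  refine (card_le_card cover).trans (card_biUnion_le_card_mul _ _ _ fun k hk => ?_)
  exact card_le_card_of_injOn (f k) (fun ω => by simp) (hf k hk).injOn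

theorem one_div_card_le_probExt {ι : Type*} {n' n : ℕ} (M : Matrix (Fin n') (Fin n') ℝ)
    (F : Finset ι) (f : ι → (Fin n → Fin n → Bool) → Fin n → Fin n → Bool)
    (hf : ∀ k ∈ F, Function.Injective (f k)) (P : Matrix (Fin n) (Fin n) ℝ → Prop)
    (h : ∀ ω, ∃ k ∈ F, P (extSym n M (f k ω))) :
    1 / (#F : ℝ) ≤ probExt n M P := by
  classical
  have card_bound : 2 ^ (n * n) ≤ #F * #{ω | P (extSym n M ω)} := by
    simpa [pow_mul] using card_le_card_mul_card_filter F f hf (fun ω => P (extSym n M ω)) h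
  refine div_le_of_le_mul₀ (Nat.cast_nonneg _) (by unfold probExt; positivity) ?_
  rw [probExt, div_mul_eq_mul_div, one_le_div (by positivity)]
  exact_mod_cast card_bound.trans_eq (mul_comm _ _)

theorem probExt_mono {n' n : ℕ} (M : Matrix (Fin n') (Fin n') ℝ)
    {P Q : Matrix (Fin n) (Fin n) ℝ → Prop} (h : ∀ N, P N → Q N) :
    probExt n M P ≤ probExt n M Q := by
  unfold probExt
  gcongr
  exact h _

variable {n : ℕ}

theorem abs_rad (b : Bool) : |rad b| = 1 := by
  cases b <;> simp [rad]

theorem rad_not (b : Bool) : rad (!b) = -rad b := by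
  cases b <;> simp [rad]

/-- The off-diagonal entries of the row and column which `extSym (n + 1)` appends to an `n × n`
matrix. They sit at the positions `(k, n)` because `extSym` reads `ω` above the diagonal. -/
noncomputable def borderEntries (ω : Fin (n + 1) → Fin (n + 1) → Bool) (k : Fin n) : ℝ :=
  rad (ω k.castSucc (Fin.last n))

theorem permOn_extSym_insert_last (M : Matrix (Fin n) (Fin n) ℝ)
    (ω : Fin (n + 1) → Fin (n + 1) → Bool) (S T : Finset (Fin n)) :
    permOn (extSym (n + 1) M ω) (insert (Fin.last n) (S.map Fin.castSuccEmb))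
        (insert (Fin.last n) (T.map Fin.castSuccEmb)) =
      rad (ω (Fin.last n) (Fin.last n)) * permOn M S T +
        (permCofactor M S T).toQuadraticForm' (borderEntries ω) := by
  have block : (extSym (n + 1) M ω).submatrix Fin.castSucc Fin.castSucc = M := by
    ext r c
    simp [extSym]
  have corner : extSym (n + 1) M ω (Fin.last n) (Fin.last n) =
      rad (ω (Fin.last n) (Fin.last n)) := by
    simp [extSym]
  have last_col : (fun r : Fin n => extSym (n + 1) M ω r.castSucc (Fin.last n)) =
      borderEntries ω := by
    ext r
    simp [extSym, borderEntries, (Fin.castSucc_lt_last r).le]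
  have last_row : (fun c : Fin n => extSym (n + 1) M ω (Fin.last n) c.castSucc) =
      borderEntries ω := by
    ext c
    simp [extSym, borderEntries, (Fin.castSucc_lt_last c).not_ge]
  rw [permOn_insert_last, block, corner, last_col, last_row, Matrix.toQuadraticForm',
    LinearMap.BilinMap.toQuadraticMap_apply, Matrix.toLinearMap₂'_apply']

/-- The Boolean data `ω` with the positions behind the border entries indexed by `s` negated, so
that these entries change sign and all others stay the same. -/
def flipBorder (s : Finset (Fin n)) (ω : Fin (n + 1) → Fin (n + 1) → Bool) :
    Fin (n + 1) → Fin (n + 1) → Bool :=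
  fun r c => if r ∈ s.map Fin.castSuccEmb ∧ c = Fin.last n then !ω r c else ω r c

theorem flipBorder_involutive (s : Finset (Fin n)) : Function.Involutive (flipBorder s) := by
  intro ω
  ext r c
  unfold flipBorder
  split_ifs <;> simp

theorem borderEntries_flipBorder (s : Finset (Fin n)) (ω : Fin (n + 1) → Fin (n + 1) → Bool) :
    borderEntries (flipBorder s ω) = s.piecewise (-borderEntries ω) (borderEntries ω) := by
  ext k
  by_cases hk : k ∈ s <;> simp [borderEntries, flipBorder, hk, rad_not]

theorem flipBorder_last_last (s : Finset (Fin n)) (ω : Fin (n + 1) → Fin (n + 1) → Bool) :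
    flipBorder s ω (Fin.last n) (Fin.last n) = ω (Fin.last n) (Fin.last n) :=
  if_neg fun h => last_notMem_map_castSucc s h.1

theorem one_fourth_le_probExt_abs_permCofactor_le (M : Matrix (Fin n) (Fin n) ℝ)
    (S T : Finset (Fin n)) {i j : Fin n} (hij : i ≠ j) :
    1 / 4 ≤ probExt (n + 1) M fun N =>
      |permCofactor M S T i j + permCofactor M S T j i| ≤
        |permOn N (insert (Fin.last n) (S.map Fin.castSuccEmb))
          (insert (Fin.last n) (T.map Fin.castSuccEmb))| := by
  have card_flips : #(powerset {i, j}) = 4 := by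
    rw [card_powerset, card_pair hij]
    rfl
  let heavy (N : Matrix (Fin (n + 1)) (Fin (n + 1)) ℝ) : Prop :=
    |permCofactor M S T i j + permCofactor M S T j i| ≤
      |permOn N (insert (Fin.last n) (S.map Fin.castSuccEmb))
        (insert (Fin.last n) (T.map Fin.castSuccEmb))|
  have some_flip_heavy (ω : Fin (n + 1) → Fin (n + 1) → Bool) :
      ∃ s ∈ powerset {i, j}, heavy (extSym (n + 1) M (flipBorder s ω)) := by
    simp only [heavy, permOn_extSym_insert_last, borderEntries_flipBorder, flipBorder_last_last,
      ← polar_toQuadraticForm'_single]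
    exact exists_flip_abs_polar_le _ hij (abs_rad _) (abs_rad _) _
  simpa [card_flips] using one_div_card_le_probExt M (powerset {i, j}) flipBorder
    (fun s _ => (flipBorder_involutive s).injective) heavy some_flip_heavy

theorem one_fourth_le_probExt_swap (M : Matrix (Fin n) (Fin n) ℝ) {S C : Finset (Fin n)}
    {i j : Fin n} (hij : i ≠ j) (hi : i ∈ S \ C) (hj : j ∈ S \ C) :
    1 / 4 ≤ probExt (n + 1) M fun N =>
      |permOn M (S.erase i) (insert i C) + permOn M (S.erase j) (insert j C)| ≤
        |permOn N (insert (Fin.last n) (S.map Fin.castSuccEmb))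
          (insert (Fin.last n) ((insert i (insert j C)).map Fin.castSuccEmb))| := by
  rw [mem_sdiff] at hi hj
  have cofactor_ij : permCofactor M S (insert i (insert j C)) i j =
      permOn M (S.erase i) (insert i C) := by
    rw [permCofactor_apply M hi.1 (by simp), insert_comm, erase_insert (by simp [hij.symm, hj.2])]
  have cofactor_ji : permCofactor M S (insert i (insert j C)) j i =
      permOn M (S.erase j) (insert j C) := by
    rw [permCofactor_apply M hj.1 (by simp), erase_insert (by simp [hij, hi.2])]
  rw [← cofactor_ij, ← cofactor_ji]
  exact one_fourth_le_probExt_abs_permCofactor_le M S _ hij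

end RandomExtension

theorem two_thirds_abs_le_abs_add (u v w : ℝ) :
    2 / 3 * |u| ≤ |u + v| ∨ 2 / 3 * |u| ≤ |u + w| ∨ 2 / 3 * |u| ≤ |v + w| := by
  by_contra! ⟨huv, huw, hvw⟩
  have two_u : |(u + v) + (u + w) - (v + w)| = 2 * |u| := by
    rw [← abs_two, ← abs_mul]
    ring_nf
  linarith [abs_sub ((u + v) + (u + w)) (v + w), abs_add_le (u + v) (u + w)]

theorem corner_might_work_general (n : ℕ) (M : Matrix (Fin n) (Fin n) ℝ) (A B : Finset (Fin n))
    (a b₁ b₂ : Fin n) (ha : a ∈ B \ A) (hb₁ : b₁ ∈ A \ B) (hb₂ : b₂ ∈ A \ B) (hb : b₁ ≠ b₂) :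
    ∃ i j : Fin n, i ≠ j ∧ i ∈ ({a, b₁, b₂} : Finset (Fin n)) ∧
      j ∈ ({a, b₁, b₂} : Finset (Fin n)) ∧
      1 / 4 ≤ probExt (n + 1) M fun M' =>
        2 / 3 * |permOn M A B| ≤ |permOn M'
          (insert (Fin.last n) ((insert a A).map Fin.castSuccEmb))
          (insert (Fin.last n)
            ((insert i (insert j (B.erase a))).map Fin.castSuccEmb))| := by
  rw [mem_sdiff] at ha hb₁ hb₂
  have hab₁ : a ≠ b₁ := ne_of_mem_of_not_mem ha.1 hb₁.2
  have hab₂ : a ≠ b₂ := ne_of_mem_of_not_mem ha.1 hb₂.2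
  let w (k : Fin n) : ℝ := permOn M ((insert a A).erase k) (insert k (B.erase a))
  have w_a : w a = permOn M A B := by simp only [w, erase_insert ha.2, insert_erase ha.1]
  have heavy (i j : Fin n) (hij : i ≠ j) (hi : i ∈ insert a A \ B.erase a)
      (hj : j ∈ insert a A \ B.erase a) (h : 2 / 3 * |w a| ≤ |w i + w j|) :=
    (one_fourth_le_probExt_swap M hij hi hj).trans
      (probExt_mono M fun _ => h.trans)
  rw [← w_a]
  rcases two_thirds_abs_le_abs_add (w a) (w b₁) (w b₂) with h | h | h
  · exact ⟨a, b₁, hab₁, by simp, by simp, heavy a b₁ hab₁ (by simp) (by simp [hb₁]) h⟩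
  · exact ⟨a, b₂, hab₂, by simp, by simp, heavy a b₂ hab₂ (by simp) (by simp [hb₂]) h⟩
  · exact ⟨b₁, b₂, hb, by simp, by simp, heavy b₁ b₂ hb (by simp [hb₁]) (by simp [hb₂]) h⟩

/-- Growing a heavy submatrix by two rows and columns using the quadratic expansion:
if `M[A,B]` is `λ`-heavy (`|A| = |B|`), `a ∈ B \ A`, and `b₁, b₂ ∈ A \ B` are distinct,
then one can choose distinct `i, j ∈ {a, b₁, b₂}` such that after appending a random
symmetric row and column to the symmetric `±1` matrix `M`, with probability at least `1/4`
the submatrix `M_n[A ∪ {a, n}, (B \ {a}) ∪ {i, j, n}]` is `(λ/2)`-heavy. -/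
theorem corner_might_work (n : ℕ) (M : Matrix (Fin n) (Fin n) ℝ) (hsym : M.IsSymm)
    (hsign : ∀ i j, M i j = 1 ∨ M i j = -1)
    (A B : Finset (Fin n)) (hAB : A.card = B.card) (lam : ℝ) (hlam : 0 < lam)
    (hheavy : lam ≤ |permOn M A B|)
    (a b₁ b₂ : Fin n) (ha : a ∈ B \ A) (hb₁ : b₁ ∈ A \ B) (hb₂ : b₂ ∈ A \ B)
    (hb : b₁ ≠ b₂) :
    ∃ i j : Fin n, i ≠ j ∧ i ∈ ({a, b₁, b₂} : Finset (Fin n)) ∧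
      j ∈ ({a, b₁, b₂} : Finset (Fin n)) ∧
      1 / 4 ≤ probExt (n + 1) M fun M' =>
        lam / 2 ≤ |permOn M'
          (insert (Fin.last n) ((insert a A).map Fin.castSuccEmb))
          (insert (Fin.last n)
            ((insert i (insert j (B.erase a))).map Fin.castSuccEmb))| := by
  obtain ⟨i, j, hij, hi, hj, h⟩ := corner_might_work_general n M A B a b₁ b₂ ha hb₁ hb₂ hb
  exact ⟨i, j, hij, hi, hj, h.trans (probExt_mono M fun N hN => by linarith)⟩
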